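/- Assume that for each n the coefficients of P_n(·; z) are differentiable functions of z on (0, ∞). Let σ_n(z) be minus the coefficient of x^{n−1} in P_n(x; z), and h_n(z) = ∫₀^z P_n(x; z)² x^α e^{−x} dx. Then for every n ≥ 0 and z > 0: z·σ_n′(z) = σ_n(z) − a_n(z) and z·h_n′(z) = (2n + α + 1 − b_n(z))·h_n(z); consequently the recurrence coefficients solve the Toda equations z·(ln a_n)′ = 2 − (b_n − b_{n−1}) (n ≥ 1) and z·b_n′ = b_n − (a_{n+1} − a_n) (n ≥ 0). -/

import Mathlib

open MeasureTheory intervalIntegral Polynomial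

/-!
The weight `w(x) = x ^ α * exp (-x)` satisfies `(x w p)' = w * ((α + 1 - x) p + x p')`, and the
integral of the left-hand side over `[0, z]` is `z w(z) p(z) = z * d/dz ℓ_z(p)`. So the functional
`ℓ_z` obeys the linear flow `z * d/dz ℓ_z(p) = ℓ_z((α + 1 - x) p + x p')`, and this alone yields the
Toda equations. Differentiate `ℓ_z(P_n ^ 2) = h_n` and `ℓ_z(P_{n+1} P_n) = 0`: the polynomials
`∂P_n/∂z` have degree less than `n`, so by orthogonality only top coefficients survive, which gives
the equations for `h_n` and `σ_n`. Those for `a_n = h_n / h_{n-1}` and `b_n = σ_{n+1} - σ_n` follow.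

The coefficients of `P_n` are differentiable in `z`, by induction along the three-term
recurrence: `b_n = ℓ_z(x P_n ^ 2) / h_n` and `a_n` depend differentiably on `z` once `P_n` and
`P_{n-1}` do.
-/

section Polynomial

variable {R : Type*}

lemma coeff_X_mul_derivative [Semiring R] (q : R[X]) (k : ℕ) :
    (X * derivative q).coeff k = k * q.coeff k := by
  cases k with
  | zero => simp
  | succ k => rw [coeff_X_mul, coeff_derivative, ← Nat.cast_add_one, Nat.cast_comm]

lemma natDegree_X_mul_derivative_le [Semiring R] (q : R[X]) :
    (X * derivative q).natDegree ≤ q.natDegree := by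
  refine natDegree_le_iff_coeff_eq_zero.2 fun k hk => ?_
  rw [coeff_X_mul_derivative, coeff_eq_zero_of_natDegree_lt hk, mul_zero]

lemma linearMap_C_mul [Semiring R] (L : R[X] →ₗ[R] R) (c : R) (q : R[X]) :
    L (C c * q) = c * L q := by
  rw [← smul_eq_C_mul, map_smul, smul_eq_mul]

lemma linearMap_mul_sub_C_mul [CommRing R] (L : R[X] →ₗ[R] R) (r q s : R[X]) (c : R) :
    L (r * (q - C c * s)) = L (r * q) - c * L (r * s) := by
  rw [mul_sub, mul_left_comm, map_sub, linearMap_C_mul]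

lemma linearMap_eq_sum_range [Semiring R] (L : R[X] →ₗ[R] R) {q : R[X]} {N : ℕ}
    (hq : q.natDegree < N) : L q = ∑ k ∈ Finset.range N, q.coeff k * L (X ^ k) := by
  conv_lhs => rw [q.as_sum_range_C_mul_X_pow' hq]
  simp only [map_sum, linearMap_C_mul]

end Polynomial

section OrthogonalPolynomials

variable {R : Type*} [CommRing R]

/-- The sequence of monic orthogonal polynomials of a linear functional `L` on polynomials. The
functional need not be positive, so the squared norms `L (p n * p n)` are only required not to
vanish. -/
structure IsMonicOrthogonal (L : R[X] →ₗ[R] R) (p : ℕ → R[X]) : Prop where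
  monic (n : ℕ) : (p n).Monic
  natDegree_eq (n : ℕ) : (p n).natDegree = n
  apply_mul_eq_zero {m n : ℕ} (hmn : m ≠ n) : L (p m * p n) = 0
  apply_mul_self_ne_zero (n : ℕ) : L (p n * p n) ≠ 0

/-- The three-term recurrence of a polynomial sequence, with coefficients `a` and `b`. The
convention `p (-1) = 0` is encoded by `a 0 = 0`: at `n = 0` the truncated `n - 1` is `0`, and the
last term of the recurrence vanishes. -/
structure HasThreeTermRecurrence (p : ℕ → R[X]) (a b : ℕ → R) : Prop where
  a_zero : a 0 = 0
  X_mul (n : ℕ) : X * p n = p (n + 1) + C (b n) * p n + C (a n) * p (n - 1)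

lemma HasThreeTermRecurrence.of_forall_one_le {p : ℕ → R[X]} {a b : ℕ → R} (ha : a 0 = 0)
    (hzero : X * p 0 = p 1 + C (b 0) * p 0)
    (hpos : ∀ n, 1 ≤ n → X * p n = p (n + 1) + C (b n) * p n + C (a n) * p (n - 1)) :
    HasThreeTermRecurrence p a b where
  a_zero := ha
  X_mul n := by
    rcases n.eq_zero_or_pos with rfl | hn
    · rw [hzero, ha, C_0, zero_mul, add_zero]
    · exact hpos n hn

lemma HasThreeTermRecurrence.apply_mul_X_mul {p : ℕ → R[X]} {a b : ℕ → R}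
    (hrec : HasThreeTermRecurrence p a b) (L : R[X] →ₗ[R] R) (q : R[X]) (n : ℕ) :
    L (q * (X * p n)) = L (q * p (n + 1)) + b n * L (q * p n) + a n * L (q * p (n - 1)) := by
  rw [hrec.X_mul, mul_add, mul_add, mul_left_comm q (C (b n)), mul_left_comm q (C (a n)), map_add,
    map_add, linearMap_C_mul, linearMap_C_mul]

namespace IsMonicOrthogonal

variable {L : R[X] →ₗ[R] R} {p : ℕ → R[X]} {a b : ℕ → R} {n : ℕ} {q : R[X]}

lemma coeff_self (hp : IsMonicOrthogonal L p) (n : ℕ) : (p n).coeff n = 1 := by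
  simpa only [hp.natDegree_eq] using (hp.monic n).coeff_natDegree

lemma coeff_eq_zero (hp : IsMonicOrthogonal L p) {k : ℕ} (hk : n < k) : (p n).coeff k = 0 :=
  coeff_eq_zero_of_natDegree_lt (by rwa [hp.natDegree_eq])

lemma nextCoeff_zero (hp : IsMonicOrthogonal L p) : (p 0).nextCoeff = 0 :=
  if_pos (hp.natDegree_eq 0)

lemma nextCoeff_succ (hp : IsMonicOrthogonal L p) (n : ℕ) :
    (p (n + 1)).nextCoeff = (p (n + 1)).coeff n := by
  rw [nextCoeff_of_natDegree_pos (by simp [hp.natDegree_eq]), hp.natDegree_eq, Nat.add_sub_cancel]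

lemma coeff_X_mul_self (hp : IsMonicOrthogonal L p) (n : ℕ) :
    (X * p n).coeff n = (p n).nextCoeff := by
  cases n with
  | zero => rw [mul_coeff_zero, coeff_X_zero, zero_mul, hp.nextCoeff_zero]
  | succ n => rw [coeff_X_mul, hp.nextCoeff_succ]

lemma degree_sub_C_mul_lt (hp : IsMonicOrthogonal L p) (hq : q.natDegree ≤ n) :
    (q - C (q.coeff n) * p n).degree < n := by
  refine (degree_lt_iff_coeff_zero _ _).2 fun k hk => ?_
  rw [coeff_sub, coeff_C_mul]
  rcases hk.eq_or_lt with rfl | hk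
  · rw [hp.coeff_self, mul_one, sub_self]
  · rw [hp.coeff_eq_zero hk, coeff_eq_zero_of_natDegree_lt (hq.trans_lt hk), mul_zero, sub_zero]

lemma apply_mul_eq_zero_of_degree_lt (hp : IsMonicOrthogonal L p) (hq : q.degree < n) :
    L (p n * q) = 0 := by
  suffices H : ∀ N ≤ n, ∀ q : R[X], q.degree < N → L (p n * q) = 0 from H n le_rfl q hq
  intro N
  induction N with
  | zero =>
    intro _ q hq
    rw [degree_eq_bot.1 (Nat.WithBot.lt_zero_iff.1 hq), mul_zero, map_zero]
  | succ N ih =>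
    intro hN q hq
    have hqN : q.natDegree ≤ N :=
      natDegree_le_iff_coeff_eq_zero.2 ((degree_lt_iff_coeff_zero _ _).1 hq)
    have hsub := ih (by lia) _ (hp.degree_sub_C_mul_lt hqN)
    rwa [linearMap_mul_sub_C_mul, hp.apply_mul_eq_zero (by lia), mul_zero, sub_zero] at hsub

lemma apply_mul_of_natDegree_le (hp : IsMonicOrthogonal L p) (hq : q.natDegree ≤ n) :
    L (p n * q) = q.coeff n * L (p n * p n) := by
  have hsub := hp.apply_mul_eq_zero_of_degree_lt (hp.degree_sub_C_mul_lt hq)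
  rwa [linearMap_mul_sub_C_mul, sub_eq_zero] at hsub

lemma apply_succ_mul_X_mul (hp : IsMonicOrthogonal L p) (n : ℕ) :
    L (p (n + 1) * (X * p n)) = L (p (n + 1) * p (n + 1)) := by
  have hdeg : (X * p n).natDegree ≤ n + 1 :=
    add_comm 1 n ▸ natDegree_mul_le_of_le natDegree_X_le (hp.natDegree_eq n).le
  rw [hp.apply_mul_of_natDegree_le hdeg, coeff_X_mul, hp.coeff_self, one_mul]

lemma apply_mul_X_mul_derivative_self (hp : IsMonicOrthogonal L p) (n : ℕ) :
    L (p n * (X * derivative (p n))) = n * L (p n * p n) := by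
  rw [hp.apply_mul_of_natDegree_le ((natDegree_X_mul_derivative_le _).trans (hp.natDegree_eq n).le),
    coeff_X_mul_derivative, hp.coeff_self, mul_one]

lemma apply_succ_mul_X_mul_derivative (hp : IsMonicOrthogonal L p) (n : ℕ) :
    L (p (n + 1) * (X * derivative (p n))) = 0 := by
  refine hp.apply_mul_eq_zero_of_degree_lt ((degree_lt_iff_coeff_zero _ _).2 fun k hk => ?_)
  rw [coeff_X_mul_derivative, hp.coeff_eq_zero hk, mul_zero]

lemma apply_mul_X_mul_derivative_succ (hp : IsMonicOrthogonal L p) (n : ℕ) :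
    L (p n * (X * derivative (p (n + 1)))) = -(p (n + 1)).nextCoeff * L (p n * p n) := by
  -- Subtracting `(n + 1) * p (n + 1)`, which is orthogonal to `p n`, lowers the degree to `n`.
  set q := X * derivative (p (n + 1)) - C ((n : R) + 1) * p (n + 1) with hq
  have hcoeff (k : ℕ) : q.coeff k = (k - (n + 1)) * (p (n + 1)).coeff k := by
    rw [hq, coeff_sub, coeff_X_mul_derivative, coeff_C_mul, sub_mul]
  have hdeg : q.natDegree ≤ n := by
    refine natDegree_le_iff_coeff_eq_zero.2 fun k hk => ?_
    rw [hcoeff]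
    rcases (Nat.succ_le_of_lt hk).eq_or_lt with rfl | hk
    · simp
    · rw [hp.coeff_eq_zero hk, mul_zero]
  have happly := hp.apply_mul_of_natDegree_le hdeg
  rw [hq, linearMap_mul_sub_C_mul, hp.apply_mul_eq_zero (by lia), mul_zero, sub_zero,
    ← hq] at happly
  rw [happly, hcoeff, hp.nextCoeff_succ]
  ring

lemma b_eq (hp : IsMonicOrthogonal L p) (hrec : HasThreeTermRecurrence p a b) (n : ℕ) :
    b n = (p n).nextCoeff - (p (n + 1)).nextCoeff := by
  have hlast : a n * (p (n - 1)).coeff n = 0 := by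
    cases n with
    | zero => rw [hrec.a_zero, zero_mul]
    | succ n => rw [Nat.add_sub_cancel, hp.coeff_eq_zero n.lt_succ_self, mul_zero]
  have hcoeff := congrArg (coeff · n) (hrec.X_mul n)
  simp only [coeff_add, coeff_C_mul, hp.coeff_X_mul_self, hp.coeff_self, hlast] at hcoeff
  rw [hcoeff, hp.nextCoeff_succ]
  ring

lemma apply_mul_X_mul_self (hp : IsMonicOrthogonal L p) (hrec : HasThreeTermRecurrence p a b)
    (n : ℕ) : L (p n * (X * p n)) = b n * L (p n * p n) := by
  have hlast : a n * L (p n * p (n - 1)) = 0 := by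
    cases n with
    | zero => rw [hrec.a_zero, zero_mul]
    | succ n => rw [hp.apply_mul_eq_zero (by lia), mul_zero]
  rw [hrec.apply_mul_X_mul, hlast, hp.apply_mul_eq_zero (by lia), zero_add, add_zero]

lemma a_succ_mul (hp : IsMonicOrthogonal L p) (hrec : HasThreeTermRecurrence p a b) (n : ℕ) :
    a (n + 1) * L (p n * p n) = L (p (n + 1) * p (n + 1)) := by
  rw [← hp.apply_succ_mul_X_mul, show p (n + 1) * (X * p n) = p n * (X * p (n + 1)) by ring,
    hrec.apply_mul_X_mul, Nat.add_sub_cancel, hp.apply_mul_eq_zero (n := n + 1 + 1) (by lia),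
    hp.apply_mul_eq_zero n.lt_succ_self.ne, mul_zero, zero_add, zero_add]

lemma a_succ_ne_zero (hp : IsMonicOrthogonal L p) (hrec : HasThreeTermRecurrence p a b) (n : ℕ) :
    a (n + 1) ≠ 0 :=
  left_ne_zero_of_mul (hp.a_succ_mul hrec n ▸ hp.apply_mul_self_ne_zero (n + 1))

end IsMonicOrthogonal

end OrthogonalPolynomials

section CoefficientwiseDerivative

open Filter Topology

variable {𝕜 : Type*} [NontriviallyNormedField 𝕜]

/-- The polynomial `Q'` is the coefficientwise derivative at `z` of the family of polynomials `Q`.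
The degree of `Q t` has to stay bounded for `t` near `z`, so that such families lie in a
finite-dimensional space and can be differentiated under a linear functional. -/
structure HasCoeffDerivAt (Q : 𝕜 → 𝕜[X]) (Q' : 𝕜[X]) (z : 𝕜) : Prop where
  exists_natDegree_le : ∃ N, ∀ᶠ t in 𝓝 z, (Q t).natDegree ≤ N
  coeff (k : ℕ) : HasDerivAt (fun t => (Q t).coeff k) (Q'.coeff k) z

namespace HasCoeffDerivAt

variable {Q S : 𝕜 → 𝕜[X]} {Q' S' : 𝕜[X]} {z : 𝕜}

lemma congr_of_eventuallyEq (hQ : HasCoeffDerivAt Q Q' z) (h : S =ᶠ[𝓝 z] Q) :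
    HasCoeffDerivAt S Q' z where
  exists_natDegree_le := by
    obtain ⟨N, hN⟩ := hQ.exists_natDegree_le
    exact ⟨N, by filter_upwards [h, hN] with t ht hNt using ht ▸ hNt⟩
  coeff k := (hQ.coeff k).congr_of_eventuallyEq (h.fun_comp fun q => q.coeff k)

lemma const (q : 𝕜[X]) (z : 𝕜) : HasCoeffDerivAt (fun _ => q) 0 z where
  exists_natDegree_le := ⟨q.natDegree, .of_forall fun _ => le_rfl⟩
  coeff k := hasDerivAt_const z (q.coeff k)

lemma C {f : 𝕜 → 𝕜} {f' : 𝕜} (hf : HasDerivAt f f' z) :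
    HasCoeffDerivAt (fun t => C (f t)) (C f') z where
  exists_natDegree_le := ⟨0, .of_forall fun t => (natDegree_C (f t)).le⟩
  coeff k := by
    cases k with
    | zero => simpa only [coeff_C_zero] using hf
    | succ k => simpa only [coeff_C_succ] using hasDerivAt_const z (0 : 𝕜)

lemma sub (hQ : HasCoeffDerivAt Q Q' z) (hS : HasCoeffDerivAt S S' z) :
    HasCoeffDerivAt (fun t => Q t - S t) (Q' - S') z where
  exists_natDegree_le := by
    obtain ⟨N, hN⟩ := hQ.exists_natDegree_le
    obtain ⟨M, hM⟩ := hS.exists_natDegree_le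
    exact ⟨max N M, by filter_upwards [hN, hM] with t using natDegree_sub_le_of_le⟩
  coeff k := by simpa only [coeff_sub] using (hQ.coeff k).fun_sub (hS.coeff k)

lemma mul (hQ : HasCoeffDerivAt Q Q' z) (hS : HasCoeffDerivAt S S' z) :
    HasCoeffDerivAt (fun t => Q t * S t) (Q' * S z + Q z * S') z where
  exists_natDegree_le := by
    obtain ⟨N, hN⟩ := hQ.exists_natDegree_le
    obtain ⟨M, hM⟩ := hS.exists_natDegree_le
    exact ⟨N + M, by filter_upwards [hN, hM] with t using natDegree_mul_le_of_le⟩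
  coeff k := by
    simp only [coeff_mul, coeff_add, ← Finset.sum_add_distrib]
    exact HasDerivAt.fun_sum fun i _ => (hQ.coeff i.1).mul (hS.coeff i.2)

lemma natDegree_le (hQ : HasCoeffDerivAt Q Q' z) {N : ℕ} (hN : ∀ᶠ t in 𝓝 z, (Q t).natDegree ≤ N) :
    Q'.natDegree ≤ N := by
  refine natDegree_le_iff_coeff_eq_zero.2 fun k hk => (hQ.coeff k).unique ?_
  refine (hasDerivAt_const z (0 : 𝕜)).congr_of_eventuallyEq ?_
  filter_upwards [hN] with t ht using coeff_eq_zero_of_natDegree_lt (ht.trans_lt hk)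

lemma degree_lt_of_monic (hQ : HasCoeffDerivAt Q Q' z) {n : ℕ}
    (hmonic : ∀ᶠ t in 𝓝 z, (Q t).Monic) (hdeg : ∀ᶠ t in 𝓝 z, (Q t).natDegree = n) :
    Q'.degree < n := by
  refine (degree_lt_iff_coeff_zero _ _).2 fun k hk => ?_
  rcases hk.eq_or_lt with rfl | hk
  · refine (hQ.coeff _).unique ((hasDerivAt_const z (1 : 𝕜)).congr_of_eventuallyEq ?_)
    filter_upwards [hmonic, hdeg] with t hmt hdt using hdt ▸ hmt.coeff_natDegree
  · exact coeff_eq_zero_of_natDegree_lt ((hQ.natDegree_le (hdeg.mono fun _ h => h.le)).trans_lt hk)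

lemma linearMap_apply (hQ : HasCoeffDerivAt Q Q' z) {L : 𝕜 → 𝕜[X] →ₗ[𝕜] 𝕜}
    (hL : ∀ q, DifferentiableAt 𝕜 (fun t => L t q) z) :
    HasDerivAt (fun t => L t (Q t)) (L z Q' + deriv (fun t => L t (Q z)) z) z := by
  obtain ⟨N, hN⟩ := hQ.exists_natDegree_le
  have hlt {q : 𝕜[X]} (hq : q.natDegree ≤ N) : q.natDegree < N + 1 := Nat.lt_succ_of_le hq
  have hmoment (k : ℕ) := (hL (X ^ k)).hasDerivAt
  have hderiv : deriv (fun t => L t (Q z)) z =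
      ∑ k ∈ Finset.range (N + 1), (Q z).coeff k * deriv (fun t => L t (X ^ k)) z := by
    simp only [linearMap_eq_sum_range _ (hlt hN.self_of_nhds)]
    exact (HasDerivAt.fun_sum fun k _ => (hmoment k).const_mul ((Q z).coeff k)).deriv
  have hexpand : (fun t => L t (Q t)) =ᶠ[𝓝 z]
      fun t => ∑ k ∈ Finset.range (N + 1), (Q t).coeff k * L t (X ^ k) := by
    filter_upwards [hN] with t ht using linearMap_eq_sum_range (L t) (hlt ht)
  refine HasDerivAt.congr_of_eventuallyEq ?_ hexpand
  rw [hderiv, linearMap_eq_sum_range (L z) (hlt (hQ.natDegree_le hN)), ← Finset.sum_add_distrib]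
  exact HasDerivAt.fun_sum fun k _ => (hQ.coeff k).mul (hmoment k)

end HasCoeffDerivAt

end CoefficientwiseDerivative

section OrthogonalFamilies

open Filter Topology

variable {𝕜 : Type*} [NontriviallyNormedField 𝕜]

/-- A functional `L t` depending on a parameter, with its monic orthogonal polynomials `P n t` and
their recurrence coefficients `a n t`, `b n t`, for all `t` in a neighbourhood of `z`. -/
structure IsOrthogonalFamilyNear (L : 𝕜 → 𝕜[X] →ₗ[𝕜] 𝕜) (P : ℕ → 𝕜 → 𝕜[X]) (a b : ℕ → 𝕜 → 𝕜)
    (z : 𝕜) : Prop where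
  isMonicOrthogonal : ∀ᶠ t in 𝓝 z, IsMonicOrthogonal (L t) (P · t)
  hasThreeTermRecurrence : ∀ᶠ t in 𝓝 z, HasThreeTermRecurrence (P · t) (a · t) (b · t)

/-- The functional `L t` satisfies `z * d/dz L_z(p) = L_z((c - x) p + x p')` at `z ≠ 0`. This is how
`∫₀^z p(x) x ^ (c - 1) exp (-x) dx` varies with its endpoint. -/
def HasLaguerreFlowAt (L : 𝕜 → 𝕜[X] →ₗ[𝕜] 𝕜) (c z : 𝕜) : Prop :=
  ∀ p, HasDerivAt (fun t => L t p) (z⁻¹ * L z ((C c - X) * p + X * derivative p)) z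

variable {L : 𝕜 → 𝕜[X] →ₗ[𝕜] 𝕜} {P : ℕ → 𝕜 → 𝕜[X]} {a b : ℕ → 𝕜 → 𝕜} {c z : 𝕜} {n : ℕ}
  {Q S : 𝕜[X]}

namespace IsOrthogonalFamilyNear

lemma a_succ_eventuallyEq (hP : IsOrthogonalFamilyNear L P a b z) (n : ℕ) :
    a (n + 1) =ᶠ[𝓝 z] fun t => L t (P (n + 1) t * P (n + 1) t) / L t (P n t * P n t) := by
  filter_upwards [hP.isMonicOrthogonal, hP.hasThreeTermRecurrence] with t hPt hrec
  rw [← hPt.a_succ_mul hrec, mul_div_cancel_right₀ _ (hPt.apply_mul_self_ne_zero n)]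

lemma b_eventuallyEq (hP : IsOrthogonalFamilyNear L P a b z) (n : ℕ) :
    b n =ᶠ[𝓝 z] fun t => L t (P n t * (X * P n t)) / L t (P n t * P n t) := by
  filter_upwards [hP.isMonicOrthogonal, hP.hasThreeTermRecurrence] with t hPt hrec
  rw [hPt.apply_mul_X_mul_self hrec, mul_div_cancel_right₀ _ (hPt.apply_mul_self_ne_zero n)]

lemma differentiableAt_a (hP : IsOrthogonalFamilyNear L P a b z)
    (hL : ∀ q, DifferentiableAt 𝕜 (fun t => L t q) z) (hQ : HasCoeffDerivAt (P n) Q z)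
    (hS : HasCoeffDerivAt (P (n - 1)) S z) : DifferentiableAt 𝕜 (a n) z := by
  cases n with
  | zero =>
    have hzero : a 0 =ᶠ[𝓝 z] fun _ => 0 := hP.hasThreeTermRecurrence.mono fun _ h => h.a_zero
    exact hzero.differentiableAt_iff.2 (differentiableAt_const 0)
  | succ n =>
    exact (hP.a_succ_eventuallyEq n).differentiableAt_iff.2
      (((hQ.mul hQ).linearMap_apply hL).fun_div ((hS.mul hS).linearMap_apply hL)
        (hP.isMonicOrthogonal.self_of_nhds.apply_mul_self_ne_zero n)).differentiableAt

lemma differentiableAt_b (hP : IsOrthogonalFamilyNear L P a b z)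
    (hL : ∀ q, DifferentiableAt 𝕜 (fun t => L t q) z) (hQ : HasCoeffDerivAt (P n) Q z) :
    DifferentiableAt 𝕜 (b n) z :=
  have hnum := (hQ.mul ((HasCoeffDerivAt.const X z).mul hQ)).linearMap_apply hL
  (hP.b_eventuallyEq n).differentiableAt_iff.2
    (hnum.fun_div ((hQ.mul hQ).linearMap_apply hL)
      (hP.isMonicOrthogonal.self_of_nhds.apply_mul_self_ne_zero n)).differentiableAt

lemma exists_hasCoeffDerivAt (hP : IsOrthogonalFamilyNear L P a b z)
    (hL : ∀ q, DifferentiableAt 𝕜 (fun t => L t q) z) (n : ℕ) :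
    ∃ Q, HasCoeffDerivAt (P n) Q z := by
  induction n using Nat.strong_induction_on with | _ n ih
  cases n with
  | zero =>
    refine ⟨0, (HasCoeffDerivAt.const 1 z).congr_of_eventuallyEq ?_⟩
    filter_upwards [hP.isMonicOrthogonal] with t ht
      using eq_one_of_monic_natDegree_zero (ht.monic 0) (ht.natDegree_eq 0)
  | succ n =>
    obtain ⟨Q, hQ⟩ := ih n (by lia)
    obtain ⟨S, hS⟩ := ih (n - 1) (by lia)
    have hb := HasCoeffDerivAt.C (hP.differentiableAt_b hL hQ).hasDerivAt
    have ha := HasCoeffDerivAt.C (hP.differentiableAt_a hL hQ hS).hasDerivAt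
    refine ⟨_, ((((HasCoeffDerivAt.const X z).sub hb).mul hQ).sub
      (ha.mul hS)).congr_of_eventuallyEq ?_⟩
    filter_upwards [hP.hasThreeTermRecurrence] with t ht
    linear_combination -ht.X_mul n

lemma degree_lt_of_hasCoeffDerivAt (hP : IsOrthogonalFamilyNear L P a b z)
    (hQ : HasCoeffDerivAt (P n) Q z) : Q.degree < n :=
  hQ.degree_lt_of_monic (hP.isMonicOrthogonal.mono fun _ h => h.monic n)
    (hP.isMonicOrthogonal.mono fun _ h => h.natDegree_eq n)

end IsOrthogonalFamilyNear

namespace HasLaguerreFlowAt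

lemma differentiableAt (hL : HasLaguerreFlowAt L c z) (q : 𝕜[X]) :
    DifferentiableAt 𝕜 (fun t => L t q) z :=
  (hL q).differentiableAt

lemma hasDerivAt_apply_mul (hL : HasLaguerreFlowAt L c z) {Q S : 𝕜 → 𝕜[X]} {Q' S' : 𝕜[X]}
    (hQ : HasCoeffDerivAt Q Q' z) (hS : HasCoeffDerivAt S S' z) :
    HasDerivAt (fun t => L t (Q t * S t))
      (L z (S z * Q') + L z (Q z * S') + z⁻¹ * (c * L z (Q z * S z) - L z (Q z * (X * S z)) +
        L z (S z * (X * derivative (Q z))) + L z (Q z * (X * derivative (S z))))) z := by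
  refine ((hQ.mul hS).linearMap_apply hL.differentiableAt).congr_deriv ?_
  have hpearson : (C c - X) * (Q z * S z) + X * derivative (Q z * S z) =
      C c * (Q z * S z) - Q z * (X * S z) + S z * (X * derivative (Q z)) +
        Q z * (X * derivative (S z)) := by
    rw [derivative_mul]
    ring
  rw [(hL _).deriv, hpearson, mul_comm Q', map_add, map_add, map_add, map_sub, linearMap_C_mul]

end HasLaguerreFlowAt

namespace IsOrthogonalFamilyNear

theorem hasDerivAt_apply_mul_self (hP : IsOrthogonalFamilyNear L P a b z)
    (hL : HasLaguerreFlowAt L c z) (n : ℕ) :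
    HasDerivAt (fun t => L t (P n t * P n t))
      (z⁻¹ * ((2 * n + c - b n z) * L z (P n z * P n z))) z := by
  obtain ⟨Q, hQ⟩ := hP.exists_hasCoeffDerivAt hL.differentiableAt n
  have hPz := hP.isMonicOrthogonal.self_of_nhds
  have hQ_orth : L z (P n z * Q) = 0 :=
    hPz.apply_mul_eq_zero_of_degree_lt (hP.degree_lt_of_hasCoeffDerivAt hQ)
  refine (hL.hasDerivAt_apply_mul hQ hQ).congr_deriv ?_
  rw [hQ_orth, hPz.apply_mul_X_mul_self hP.hasThreeTermRecurrence.self_of_nhds,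
    hPz.apply_mul_X_mul_derivative_self]
  ring

theorem hasDerivAt_nextCoeff (hP : IsOrthogonalFamilyNear L P a b z)
    (hL : HasLaguerreFlowAt L c z) (n : ℕ) :
    HasDerivAt (fun t => (P n t).nextCoeff) (z⁻¹ * ((P n z).nextCoeff + a n z)) z := by
  have hPz := hP.isMonicOrthogonal.self_of_nhds
  have hrec := hP.hasThreeTermRecurrence.self_of_nhds
  cases n with
  | zero =>
    have hnext : (fun t => (P 0 t).nextCoeff) =ᶠ[𝓝 z] fun _ => 0 := by
      filter_upwards [hP.isMonicOrthogonal] with t ht using ht.nextCoeff_zero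
    refine hnext.hasDerivAt_iff.2 ((hasDerivAt_const z 0).congr_deriv ?_)
    rw [hPz.nextCoeff_zero, hrec.a_zero, add_zero, mul_zero]
  | succ n =>
    obtain ⟨Q, hQ⟩ := hP.exists_hasCoeffDerivAt hL.differentiableAt (n + 1)
    obtain ⟨S, hS⟩ := hP.exists_hasCoeffDerivAt hL.differentiableAt n
    have hnext : (fun t => (P (n + 1) t).nextCoeff) =ᶠ[𝓝 z] fun t => (P (n + 1) t).coeff n := by
      filter_upwards [hP.isMonicOrthogonal] with t ht using ht.nextCoeff_succ n
    have hQ_deg : Q.natDegree ≤ n := natDegree_le_iff_coeff_eq_zero.2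
      ((degree_lt_iff_coeff_zero _ _).1 (hP.degree_lt_of_hasCoeffDerivAt hQ))
    have hS_deg : S.degree < (n + 1 : ℕ) :=
      (hP.degree_lt_of_hasCoeffDerivAt hS).trans (by exact_mod_cast n.lt_succ_self)
    have horth : (fun t => L t (P (n + 1) t * P n t)) =ᶠ[𝓝 z] fun _ => 0 := by
      filter_upwards [hP.isMonicOrthogonal] with t ht using ht.apply_mul_eq_zero n.succ_ne_self
    have hzero := (hL.hasDerivAt_apply_mul hQ hS).unique
      ((hasDerivAt_const z 0).congr_of_eventuallyEq horth)
    rw [hPz.apply_mul_of_natDegree_le hQ_deg, hPz.apply_mul_eq_zero_of_degree_lt hS_deg,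
      hPz.apply_mul_eq_zero n.succ_ne_self, hPz.apply_succ_mul_X_mul,
      hPz.apply_mul_X_mul_derivative_succ, hPz.apply_succ_mul_X_mul_derivative,
      ← hPz.a_succ_mul hrec] at hzero
    refine hnext.hasDerivAt_iff.2 ((hQ.coeff n).congr_deriv ?_)
    apply mul_right_cancel₀ (hPz.apply_mul_self_ne_zero n)
    linear_combination hzero

theorem hasDerivAt_a_succ (hP : IsOrthogonalFamilyNear L P a b z)
    (hL : HasLaguerreFlowAt L c z) (n : ℕ) :
    HasDerivAt (a (n + 1)) (z⁻¹ * ((2 - (b (n + 1) z - b n z)) * a (n + 1) z)) z := by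
  have hne := hP.isMonicOrthogonal.self_of_nhds.apply_mul_self_ne_zero n
  have hquot := (hP.hasDerivAt_apply_mul_self hL (n + 1)).fun_div
    (hP.hasDerivAt_apply_mul_self hL n) hne
  refine (hP.a_succ_eventuallyEq n).hasDerivAt_iff.2 (hquot.congr_deriv ?_)
  rw [(hP.a_succ_eventuallyEq n).self_of_nhds]
  field_simp
  push_cast
  ring

theorem hasDerivAt_log_a_succ {L : ℝ → ℝ[X] →ₗ[ℝ] ℝ} {P : ℕ → ℝ → ℝ[X]} {a b : ℕ → ℝ → ℝ}
    {c z : ℝ} (hP : IsOrthogonalFamilyNear L P a b z) (hL : HasLaguerreFlowAt L c z) (n : ℕ) :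
    HasDerivAt (fun t => Real.log (a (n + 1) t)) (z⁻¹ * (2 - (b (n + 1) z - b n z))) z := by
  have hne := hP.isMonicOrthogonal.self_of_nhds.a_succ_ne_zero
    hP.hasThreeTermRecurrence.self_of_nhds n
  refine ((hP.hasDerivAt_a_succ hL n).log hne).congr_deriv ?_
  rw [← mul_assoc, mul_div_cancel_right₀ _ hne]

theorem hasDerivAt_b (hP : IsOrthogonalFamilyNear L P a b z) (hL : HasLaguerreFlowAt L c z)
    (n : ℕ) : HasDerivAt (b n) (z⁻¹ * (b n z - (a (n + 1) z - a n z))) z := by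
  have hb : b n =ᶠ[𝓝 z] fun t => (P n t).nextCoeff - (P (n + 1) t).nextCoeff := by
    filter_upwards [hP.isMonicOrthogonal, hP.hasThreeTermRecurrence] with t hPt hrec
      using hPt.b_eq hrec n
  have hsub := (hP.hasDerivAt_nextCoeff hL n).fun_sub (hP.hasDerivAt_nextCoeff hL (n + 1))
  refine hb.hasDerivAt_iff.2 (hsub.congr_deriv ?_)
  rw [hb.self_of_nhds]
  ring

end IsOrthogonalFamilyNear

end OrthogonalFamilies

section TruncatedLaguerre

/-- The Laguerre weight `x ^ α * exp (-x)`. -/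
noncomputable def laguerreWeight (α x : ℝ) : ℝ := x ^ α * Real.exp (-x)

lemma laguerreWeight_pos (α : ℝ) {x : ℝ} (hx : 0 < x) : 0 < laguerreWeight α x :=
  mul_pos (Real.rpow_pos_of_pos hx α) (Real.exp_pos _)

lemma laguerreWeight_add_one (α : ℝ) {x : ℝ} (hx : x ≠ 0) :
    laguerreWeight (α + 1) x = x * laguerreWeight α x := by
  rw [laguerreWeight, laguerreWeight, Real.rpow_add_one hx, mul_comm (x ^ α) x, mul_assoc]

lemma hasDerivAt_laguerreWeight_add_one (α : ℝ) {x : ℝ} (hx : 0 < x) :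
    HasDerivAt (laguerreWeight (α + 1)) ((α + 1 - x) * laguerreWeight α x) x := by
  refine ((Real.hasDerivAt_rpow_const (Or.inl hx.ne')).mul (hasDerivAt_neg x).exp).congr_deriv ?_
  rw [laguerreWeight, add_sub_cancel_right, Real.rpow_add_one hx.ne']
  ring

lemma continuousOn_laguerreWeight (α : ℝ) : ContinuousOn (laguerreWeight α) (Set.Ioi 0) :=
  (continuousOn_id.rpow_const fun _ hx => Or.inl (ne_of_gt hx)).mul (by fun_prop)

variable {α : ℝ}

lemma intervalIntegrable_eval_mul_laguerreWeight (hα : -1 < α) (p : ℝ[X]) (s t : ℝ) :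
    IntervalIntegrable (fun x => p.eval x * laguerreWeight α x) volume s t :=
  ((intervalIntegrable_rpow' hα).mul_continuousOn
    (by fun_prop)).continuousOn_mul p.continuousOn

/-- The truncated Laguerre functional `p ↦ ∫₀^z p(x) x ^ α exp (-x) dx`. -/
noncomputable def truncatedLaguerre (hα : -1 < α) (z : ℝ) : ℝ[X] →ₗ[ℝ] ℝ where
  toFun p := ∫ x in (0 : ℝ)..z, p.eval x * laguerreWeight α x
  map_add' p q := by
    simp only [eval_add, add_mul]
    exact integral_add (intervalIntegrable_eval_mul_laguerreWeight hα p 0 z)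
      (intervalIntegrable_eval_mul_laguerreWeight hα q 0 z)
  map_smul' r p := by
    simp only [eval_smul, smul_eq_mul, mul_assoc, intervalIntegral.integral_const_mul,
      RingHom.id_apply]

lemma truncatedLaguerre_apply (hα : -1 < α) (z : ℝ) (p : ℝ[X]) :
    truncatedLaguerre hα z p = ∫ x in (0 : ℝ)..z, p.eval x * laguerreWeight α x :=
  rfl

lemma truncatedLaguerre_mul (hα : -1 < α) (z : ℝ) (p q : ℝ[X]) :
    truncatedLaguerre hα z (p * q) =
      ∫ x in (0 : ℝ)..z, p.eval x * q.eval x * x ^ α * Real.exp (-x) := by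
  simp only [truncatedLaguerre_apply, laguerreWeight, eval_mul, mul_assoc]

lemma truncatedLaguerre_mul_self_pos (hα : -1 < α) {z : ℝ} (hz : 0 < z) {p : ℝ[X]} (hp : p ≠ 0) :
    0 < truncatedLaguerre hα z (p * p) := by
  have hnonneg : 0 ≤ᵐ[volume.restrict (Set.uIoc 0 z)]
      fun x => (p * p).eval x * laguerreWeight α x := by
    rw [Set.uIoc_of_le hz.le]
    filter_upwards [ae_restrict_mem measurableSet_Ioc] with x hx
    rw [eval_mul]
    exact mul_nonneg (mul_self_nonneg _) (laguerreWeight_pos α hx.1).le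
  have hsupport : Set.Ioc 0 z \ {x | p.IsRoot x} ⊆
      Function.support (fun x => (p * p).eval x * laguerreWeight α x) ∩ Set.Ioc 0 z := by
    rintro x ⟨hx, hroot⟩
    have hsq : (p * p).eval x ≠ 0 := by simpa only [eval_mul] using mul_self_ne_zero.2 hroot
    exact ⟨mul_ne_zero hsq (laguerreWeight_pos α hx.1).ne', hx⟩
  rw [truncatedLaguerre_apply, integral_pos_iff_support_of_nonneg_ae' hnonneg
    (intervalIntegrable_eval_mul_laguerreWeight hα _ 0 z)]
  refine ⟨hz, lt_of_lt_of_le ?_ (measure_mono hsupport)⟩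
  rw [measure_sdiff_null ((finite_setOfPred_isRoot hp).measure_zero volume)]
  simpa using hz

lemma hasDerivAt_truncatedLaguerre (hα : -1 < α) {z : ℝ} (hz : 0 < z) (p : ℝ[X]) :
    HasDerivAt (fun t => truncatedLaguerre hα t p) (p.eval z * laguerreWeight α z) z := by
  have hcont : ContinuousOn (fun x => p.eval x * laguerreWeight α x) (Set.Ioi 0) :=
    p.continuousOn.mul (continuousOn_laguerreWeight α)
  exact integral_hasDerivAt_right (intervalIntegrable_eval_mul_laguerreWeight hα p 0 z)
    (hcont.stronglyMeasurableAtFilter isOpen_Ioi z hz) (hcont.continuousAt (Ioi_mem_nhds hz))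

lemma truncatedLaguerre_pearson (hα : -1 < α) {z : ℝ} (hz : 0 ≤ z) (p : ℝ[X]) :
    truncatedLaguerre hα z ((C (α + 1) - X) * p + X * derivative p) =
      laguerreWeight (α + 1) z * p.eval z := by
  have hcont : Continuous (laguerreWeight (α + 1)) :=
    (Real.continuous_rpow_const (by linarith)).mul (by fun_prop)
  have hderiv : ∀ x ∈ Set.Ioo 0 z, HasDerivAt (fun x => laguerreWeight (α + 1) x * p.eval x)
      (((C (α + 1) - X) * p + X * derivative p).eval x * laguerreWeight α x) x := by
    intro x hx
    refine ((hasDerivAt_laguerreWeight_add_one α hx.1).mul (p.hasDerivAt x)).congr_deriv ?_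
    simp only [eval_add, eval_mul, eval_sub, eval_C, eval_X]
    rw [laguerreWeight_add_one α hx.1.ne']
    ring
  rw [truncatedLaguerre_apply, integral_eq_sub_of_hasDerivAt_of_le hz
    (hcont.mul p.continuous).continuousOn hderiv
    (intervalIntegrable_eval_mul_laguerreWeight hα _ 0 z)]
  simp [laguerreWeight, Real.zero_rpow (by linarith : α + 1 ≠ 0)]

lemma hasLaguerreFlowAt_truncatedLaguerre (hα : -1 < α) {z : ℝ} (hz : 0 < z) :
    HasLaguerreFlowAt (truncatedLaguerre hα) (α + 1) z := by
  intro p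
  refine (hasDerivAt_truncatedLaguerre hα hz p).congr_deriv ?_
  rw [truncatedLaguerre_pearson hα hz.le, laguerreWeight_add_one α hz.ne']
  field_simp

lemma isMonicOrthogonal_truncatedLaguerre (hα : -1 < α) {z : ℝ} (hz : 0 < z) {p : ℕ → ℝ[X]}
    (hmonic : ∀ n, (p n).Monic) (hdeg : ∀ n, (p n).natDegree = n)
    (horth : ∀ m n, m ≠ n →
      ∫ x in (0 : ℝ)..z, (p m).eval x * (p n).eval x * x ^ α * Real.exp (-x) = 0) :
    IsMonicOrthogonal (truncatedLaguerre hα z) p where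
  monic := hmonic
  natDegree_eq := hdeg
  apply_mul_eq_zero {m n} hmn := (truncatedLaguerre_mul hα z _ _).trans (horth m n hmn)
  apply_mul_self_ne_zero n := (truncatedLaguerre_mul_self_pos hα hz (hmonic n).ne_zero).ne'

end TruncatedLaguerre

theorem truncated_laguerre_toda_general (α : ℝ) (hα : -1 < α)
    (P : ℕ → ℝ → ℝ[X])
    (hP_monic : ∀ n z, 0 < z → (P n z).Monic)
    (hP_deg : ∀ n z, 0 < z → (P n z).natDegree = n)
    (hP_orth : ∀ m n z, 0 < z → m ≠ n →
      ∫ x in (0 : ℝ)..z, (P m z).eval x * (P n z).eval x * x ^ α * Real.exp (-x) = 0)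
    (a b : ℕ → ℝ → ℝ)
    (ha0 : ∀ z, a 0 z = 0)
    (hrec0 : ∀ z, 0 < z → X * P 0 z = P 1 z + C (b 0 z) * P 0 z)
    (hrec : ∀ n z, 1 ≤ n → 0 < z →
      X * P n z =
        P (n + 1) z + C (b n z) * P n z + C (a n z) * P (n - 1) z)
    (σ : ℕ → ℝ → ℝ)
    (hσ0 : ∀ z, σ 0 z = 0)
    (hσ : ∀ n z, σ (n + 1) z = -((P (n + 1) z).coeff n))
    (h : ℕ → ℝ → ℝ)
    (hh : ∀ n z, h n z = ∫ x in (0 : ℝ)..z, ((P n z).eval x) ^ 2 * x ^ α * Real.exp (-x)) :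
    (∀ n : ℕ, ∀ z : ℝ, 0 < z → z * deriv (σ n) z = σ n z - a n z) ∧
    (∀ n : ℕ, ∀ z : ℝ, 0 < z →
      z * deriv (h n) z = (2 * (n : ℝ) + α + 1 - b n z) * h n z) ∧
    (∀ n : ℕ, 1 ≤ n → ∀ z : ℝ, 0 < z →
      z * deriv (fun t => Real.log (a n t)) z = 2 - (b n z - b (n - 1) z)) ∧
    (∀ n : ℕ, ∀ z : ℝ, 0 < z →
      z * deriv (b n) z = b n z - (a (n + 1) z - a n z)) := by
  have hP {z : ℝ} (hz : 0 < z) : IsOrthogonalFamilyNear (truncatedLaguerre hα) P a b z := by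
    refine ⟨?_, ?_⟩ <;> filter_upwards [Ioi_mem_nhds hz] with t ht
    · exact isMonicOrthogonal_truncatedLaguerre hα ht (hP_monic · t ht) (hP_deg · t ht)
        (hP_orth · · t ht)
    · exact .of_forall_one_le (ha0 t) (hrec0 t ht) (hrec · t · ht)
  have hL {z : ℝ} (hz : 0 < z) := hasLaguerreFlowAt_truncatedLaguerre hα hz
  have hσ_eq (n : ℕ) {z : ℝ} (hz : 0 < z) : σ n z = -(P n z).nextCoeff := by
    have hPz := (hP hz).isMonicOrthogonal.self_of_nhds
    cases n with
    | zero => rw [hσ0, hPz.nextCoeff_zero, neg_zero]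
    | succ n => rw [hσ, hPz.nextCoeff_succ]
  have hh_eq (n : ℕ) : h n = fun z => truncatedLaguerre hα z (P n z * P n z) :=
    funext fun z => by simp only [hh, truncatedLaguerre_mul, sq]
  refine ⟨fun n z hz => ?_, fun n z hz => ?_, fun n hn z hz => ?_, fun n z hz => ?_⟩
  · have hσ_near : σ n =ᶠ[nhds z] fun t => -(P n t).nextCoeff := by
      filter_upwards [Ioi_mem_nhds hz] with t ht using hσ_eq n ht
    rw [hσ_near.deriv_eq, ((hP hz).hasDerivAt_nextCoeff (hL hz) n).fun_neg.deriv, hσ_eq n hz,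
      mul_neg, mul_inv_cancel_left₀ hz.ne', neg_add']
  · rw [hh_eq, ((hP hz).hasDerivAt_apply_mul_self (hL hz) n).deriv, mul_inv_cancel_left₀ hz.ne',
      add_assoc]
  · obtain ⟨n, rfl⟩ := Nat.exists_eq_add_of_le' hn
    rw [((hP hz).hasDerivAt_log_a_succ (hL hz) n).deriv, mul_inv_cancel_left₀ hz.ne',
      Nat.add_sub_cancel]
  · rw [((hP hz).hasDerivAt_b (hL hz) n).deriv, mul_inv_cancel_left₀ hz.ne']

/-- Toda-type differential–difference equations for the `z`-dependent truncated Laguerre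
polynomials: `z·σ_n′ = σ_n − a_n`, `z·h_n′ = (2n+α+1−b_n)·h_n`, and the Toda equations
`z·(ln a_n)′ = 2 − ∇b_n`, `z·b_n′ = b_n − Δa_n`. -/
theorem truncated_laguerre_toda (α : ℝ) (hα : -1 < α)
    (P : ℕ → ℝ → Polynomial ℝ)
    (hP_monic : ∀ n z, 0 < z → (P n z).Monic)
    (hP_deg : ∀ n z, 0 < z → (P n z).natDegree = n)
    (hP_orth : ∀ m n z, 0 < z → m ≠ n →
      ∫ x in (0:ℝ)..z, (P m z).eval x * (P n z).eval x * x ^ α * Real.exp (-x) = 0)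
    (a b : ℕ → ℝ → ℝ)
    (ha0 : ∀ z, a 0 z = 0)
    (hrec0 : ∀ z, 0 < z → Polynomial.X * P 0 z = P 1 z + Polynomial.C (b 0 z) * P 0 z)
    (hrec : ∀ n z, 1 ≤ n → 0 < z →
      Polynomial.X * P n z =
        P (n + 1) z + Polynomial.C (b n z) * P n z + Polynomial.C (a n z) * P (n - 1) z)
    (hdiff : ∀ n k, DifferentiableOn ℝ (fun z => (P n z).coeff k) (Set.Ioi 0))
    (σ : ℕ → ℝ → ℝ)
    (hσ0 : ∀ z, σ 0 z = 0)
    (hσ : ∀ n z, σ (n + 1) z = -((P (n + 1) z).coeff n))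
    (h : ℕ → ℝ → ℝ)
    (hh : ∀ n z, h n z = ∫ x in (0:ℝ)..z, ((P n z).eval x) ^ 2 * x ^ α * Real.exp (-x)) :
    (∀ n : ℕ, ∀ z : ℝ, 0 < z → z * deriv (σ n) z = σ n z - a n z) ∧
    (∀ n : ℕ, ∀ z : ℝ, 0 < z →
      z * deriv (h n) z = (2 * (n : ℝ) + α + 1 - b n z) * h n z) ∧
    (∀ n : ℕ, 1 ≤ n → ∀ z : ℝ, 0 < z →
      z * deriv (fun t => Real.log (a n t)) z = 2 - (b n z - b (n - 1) z)) ∧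
    (∀ n : ℕ, ∀ z : ℝ, 0 < z →
      z * deriv (b n) z = b n z - (a (n + 1) z - a n z)) :=
  truncated_laguerre_toda_general α hα P hP_monic hP_deg hP_orth a b ha0 hrec0 hrec σ hσ0 hσ h hh
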